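/- The positive Munchausen numbers in base 9 are exactly 1, 28, 96446 and 923362; that is, for n ≥ 1, n = P_9(n) if and only if n ∈ {1, 28, 96446, 923362}. -/

import Mathlib

/-!
If a positive `n = P b n` has `L` digits, then `b ^ (L - 1) ≤ n ≤ L * (b - 1) ^ (b - 1)`, and
Bernoulli's inequality in the form `2 * (b - 1) ^ (b - 1) ≤ b ^ (b - 1)` forces `L ≤ b`. Since
`P b n` depends only on the multiset of digits of `n`, the candidates are the sums attached to the
multisets of at most `b` digits. The digits `0` and `1` contribute equally, so for `b = 9` there
are `Nat.choose 17 8 = 24310` of these.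
-/

/-- Digit power sum: `P b n = Σ cᵢ^cᵢ` over the base-`b` digits of `n`, with `0^0 = 1`. -/
def P (b n : ℕ) : ℕ := ((Nat.digits b n).map (fun c => c ^ c)).sum

theorem P_le_length_digits_mul {b : ℕ} (hb : 1 < b) (n : ℕ) :
    P b n ≤ (Nat.digits b n).length * (b - 1) ^ (b - 1) := by
  have digit_le : ∀ x ∈ (Nat.digits b n).map (fun c => c ^ c), x ≤ (b - 1) ^ (b - 1) := by
    intro x hx
    obtain ⟨c, hc, rfl⟩ := List.mem_map.mp hx
    exact Nat.pow_self_mono (Nat.le_sub_one_of_lt (Nat.digits_lt_base hb hc))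
  simpa [P] using List.sum_le_card_nsmul _ _ digit_le

theorem succ_mul_pow_self_lt_succ_pow {d m : ℕ} (hd : 0 < d) (hm : d < m) :
    (m + 1) * d ^ d < (d + 1) ^ m := by
  induction m, hm using Nat.le_induction with
  | base =>
    have bernoulli : 2 * d ^ d ≤ (d + 1) ^ d := by
      have := pow_add_mul_le_add_pow (Nat.zero_le d) (b := 1) (by lia) d
      rwa [Nat.cast_id, mul_pow_sub_one hd.ne', mul_one, ← two_mul] at this
    calc (d + 1 + 1) * d ^ d < (d + 1) * 2 * d ^ d := by gcongr; lia
      _ = 2 * d ^ d * (d + 1) := by ring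
      _ ≤ (d + 1) ^ d * (d + 1) := by gcongr
      _ = (d + 1) ^ (d + 1) := (pow_succ _ _).symm
  | succ m _ ih =>
    calc (m + 1 + 1) * d ^ d ≤ (m + 1) * d ^ d * 2 := by
          rw [mul_right_comm]; gcongr; lia
      _ < (d + 1) ^ m * 2 := by gcongr
      _ ≤ (d + 1) ^ m * (d + 1) := by gcongr; lia
      _ = (d + 1) ^ (m + 1) := (pow_succ _ _).symm

theorem length_digits_le_base_of_eq_P {b n : ℕ} (hb : 1 < b) (hn : n = P b n) :
    (Nat.digits b n).length ≤ b := by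
  by_contra! hlt
  obtain ⟨m, hm⟩ := Nat.exists_eq_add_one_of_ne_zero (Nat.ne_zero_of_lt hlt)
  obtain ⟨d, rfl⟩ := Nat.exists_eq_add_one_of_ne_zero (Nat.ne_zero_of_lt hb)
  have lower : (d + 1) ^ m ≤ n := (Nat.lt_digits_length_iff hb n).mp (by lia)
  have upper : n ≤ (m + 1) * d ^ d := by
    simpa [← hn, hm] using P_le_length_digits_mul hb n
  exact (succ_mul_pow_self_lt_succ_pow (by lia) (by lia)).not_ge (lower.trans upper)

section BoundedSums

variable {M : Type*}

/-- `ForallBoundedSum f p k d x` says that `p (x + f c₁ + ⋯ + f cᵢ)` holds whenever `i ≤ k` and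
`d > c₁ ≥ ⋯ ≥ cᵢ`. Ordering the `cⱼ` makes its evaluation visit each multiset only once. -/
def ForallBoundedSum [Add M] (f : ℕ → M) (p : M → Prop) : ℕ → ℕ → M → Prop
  | 0, _, x => p x
  | k + 1, d, x => p x ∧ ∀ c < d, ForallBoundedSum f p k (c + 1) (x + f c)

instance ForallBoundedSum.decidable [Add M] (f : ℕ → M) (p : M → Prop) [DecidablePred p] :
    ∀ k d x, Decidable (ForallBoundedSum f p k d x)
  | 0, _, x => inferInstanceAs (Decidable (p x))
  | k + 1, d, x =>
    have := ForallBoundedSum.decidable f p k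
    inferInstanceAs (Decidable (p x ∧ ∀ c < d, ForallBoundedSum f p k (c + 1) (x + f c)))

theorem ForallBoundedSum.apply_of_pairwise_ge [AddMonoid M] {f : ℕ → M} {p : M → Prop} {k d : ℕ}
    {x : M} (h : ForallBoundedSum f p k d x) {l : List ℕ} (hsorted : l.Pairwise (· ≥ ·))
    (hlength : l.length ≤ k) (hlt : ∀ c ∈ l, c < d) : p (x + (l.map f).sum) := by
  induction l generalizing k d x with
  | nil => cases k <;> simp_all [ForallBoundedSum]
  | cons c l ih =>
    obtain ⟨hge, htail⟩ := List.pairwise_cons.mp hsorted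
    obtain _ | k := k
    · simp at hlength
    have next := h.2 c (hlt c List.mem_cons_self)
    rw [List.map_cons, List.sum_cons, ← add_assoc]
    exact ih next htail (Nat.le_of_succ_le_succ hlength) fun e he => Nat.lt_succ_of_le (hge e he)

theorem ForallBoundedSum.apply [AddCommMonoid M] {f : ℕ → M} {p : M → Prop} {k d : ℕ} {x : M}
    (h : ForallBoundedSum f p k d x) {l : List ℕ} (hlength : l.length ≤ k)
    (hlt : ∀ c ∈ l, c < d) : p (x + (l.map f).sum) := by
  have perm := l.perm_insertionSort (· ≥ ·)
  rw [← (perm.map f).sum_eq]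
  exact h.apply_of_pairwise_ge (l.pairwise_insertionSort (· ≥ ·))
    (perm.length_eq.trans_le hlength) fun c hc => hlt c (perm.mem_iff.mp hc)

end BoundedSums

-- Truncated subtraction is deliberate: the digits `0` and `1` have the same summand.
theorem P_eq_sum_map_pred (b n : ℕ) :
    P b n = (((Nat.digits b n).map Nat.pred).map fun c => (c + 1) ^ (c + 1)).sum := by
  rw [P, List.map_map]
  congr 2 with c
  cases c <;> simp

theorem of_eq_P_of_forallBoundedSum {b n : ℕ} {p : ℕ → Prop} (hb : 1 < b)
    (h : ForallBoundedSum (fun c => (c + 1) ^ (c + 1)) p b (b - 1) 0) (hn : n = P b n) : p n := by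
  rw [hn, P_eq_sum_map_pred, ← Nat.zero_add (List.sum _)]
  refine h.apply (by simpa using length_digits_le_base_of_eq_P hb hn) fun e he => ?_
  obtain ⟨c, hc, rfl⟩ := List.mem_map.mp he
  have := Nat.digits_lt_base hb hc
  rw [Nat.pred_eq_sub_one]
  lia

theorem forallBoundedSum_base9 :
    ForallBoundedSum (fun c => (c + 1) ^ (c + 1))
      (fun s => 1 ≤ s → s = P 9 s → s ∈ ({1, 28, 96446, 923362} : Set ℕ)) 9 8 0 := by
  decide +kernel

theorem munchausen_base9 (n : ℕ) (hn : 1 ≤ n) :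
    n = P 9 n ↔ n ∈ ({1, 28, 96446, 923362} : Set ℕ) := by
  constructor
  · exact fun h => of_eq_P_of_forallBoundedSum (by norm_num) forallBoundedSum_base9 h hn h
  · rintro (rfl | rfl | rfl | rfl) <;> simp [P]
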